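/- Let α ∈ ℂ with Re(α) > 0, let φ ∈ C¹[0,b] with φ′ > 0 on [0,b], and let f be continuous on [0,b]. Then the function x ↦ (I_{0+}^{α,φ} f)(x) is continuous on [0,b]. -/

import Mathlib

open MeasureTheory Filter Set Finset Topology

noncomputable section

namespace FracDE

/-- The `φ`-derivative operator `f ↦ (1/φ′) f′`. -/
def phiD (φ : ℝ → ℝ) (f : ℝ → ℂ) : ℝ → ℂ :=
  fun x => ((deriv φ x : ℝ) : ℂ)⁻¹ * deriv f x

/-- The Riemann–Liouville fractional integral of order `α` with respect to `φ`, based at `a`: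
`(I_{a+}^{α,φ} f)(x) = (1/Γ(α)) ∫_a^x φ′(t) (φ(x) − φ(t))^{α−1} f(t) dt`. -/
def RLI (α : ℂ) (a : ℝ) (φ : ℝ → ℝ) (f : ℝ → ℂ) (x : ℝ) : ℂ :=
  (Complex.Gamma α)⁻¹ *
    ∫ t in a..x, ((deriv φ t : ℝ) : ℂ) * (((φ x - φ t : ℝ) : ℂ) ^ (α - 1)) * f t

/-- `n = ⌊Re α⌋ + 1`. -/
def rlN (α : ℂ) : ℕ := ⌊α.re⌋.toNat + 1

/-- The Riemann–Liouville fractional derivative of order `α` with respect to `φ`: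
`(D_{a+}^{α,φ} f)(x) = ((1/φ′(x)) d/dx)^n (I_{a+}^{n−α,φ} f)(x)`, `n = ⌊Re α⌋ + 1`. -/
def RLD (α : ℂ) (a : ℝ) (φ : ℝ → ℝ) (f : ℝ → ℂ) : ℝ → ℂ :=
  (phiD φ)^[rlN α] (RLI ((rlN α : ℂ) - α) a φ f)

open Classical in
/-- The integer `n` used in the modified Caputo-type derivative:
`n = α` if `α ∈ ℕ`, and `n = ⌊Re α⌋ + 1` otherwise. -/
def capN (α : ℂ) : ℕ := if ∃ n : ℕ, α = n then ⌊α.re⌋.toNat else ⌊α.re⌋.toNat + 1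

/-- The Taylor-type polynomial `Σ_{j<n} ((1/φ′) d/dt)^j f (a) / j! · (φ(t) − φ(a))^j`. -/
def phiTaylor (n : ℕ) (a : ℝ) (φ : ℝ → ℝ) (f : ℝ → ℂ) (t : ℝ) : ℂ :=
  ∑ j ∈ Finset.range n, ((phiD φ)^[j] f a / (Nat.factorial j : ℂ)) * ((φ t - φ a : ℝ) : ℂ) ^ j

/-- The modified Caputo-type fractional derivative with respect to `φ`. -/
def CapD (α : ℂ) (a : ℝ) (φ : ℝ → ℝ) (f : ℝ → ℂ) : ℝ → ℂ :=
  RLD α a φ (fun t => f t - phiTaylor (capN α) a φ f t)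

/-- `φ ∈ C¹[a,b]` with `φ′ > 0` on `[a,b]`. -/
structure IsC1Pos (φ : ℝ → ℝ) (a b : ℝ) : Prop where
  deriv_at : ∀ t ∈ Set.Icc a b, HasDerivAt φ (deriv φ t) t
  continuous_deriv : ContinuousOn (deriv φ) (Set.Icc a b)
  deriv_pos : ∀ t ∈ Set.Icc a b, 0 < deriv φ t

/-- The sup-norm on `[0,T]`. -/
def maxNorm (T : ℝ) (f : ℝ → ℂ) : ℝ := sSup ((fun t => ‖f t‖) '' Set.Icc 0 T)

/-- Membership in the space `C^{n₀−1,β₀}[0,T]`. -/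
def MemCspace (T : ℝ) (φ : ℝ → ℝ) (β0 : ℂ) (x : ℝ → ℂ) : Prop :=
  ContDiffOn ℝ (rlN β0 - 1 : ℕ) x (Set.Icc 0 T) ∧
    ContinuousOn (CapD β0 0 φ x) (Set.Icc 0 T)

/-- The norm of the space `C^{n₀−1,β₀}[0,T]`. -/
def normCspace (T : ℝ) (φ : ℝ → ℝ) (β0 : ℂ) (x : ℝ → ℂ) : ℝ :=
  (∑ k ∈ Finset.range (rlN β0), maxNorm T ((phiD φ)^[k] x)) + maxNorm T (CapD β0 0 φ x)

/-- The ordering assumptions on the orders `β₀, …, β_m`: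
`Re β₀ > Re β₁ > … > Re β_m ≥ 0`, and `β_m = 0` whenever `Re β_m = 0`. -/
def BetaChain (m : ℕ) (β : ℕ → ℂ) : Prop :=
  (∀ i < m, (β (i + 1)).re < (β i).re) ∧ 0 ≤ (β m).re ∧ ((β m).re = 0 → β m = 0)

/-- `x` solves `^C D^{β₀,φ} x(t) + Σ_{i=1}^m d_i(t) ^C D^{β_i,φ} x(t) = h(t)` on `[0,T]`. -/
def SolvesE (T : ℝ) (φ : ℝ → ℝ) (m : ℕ) (β : ℕ → ℂ) (d : ℕ → ℝ → ℂ) (h x : ℝ → ℂ) : Prop :=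
  ∀ t ∈ Set.Icc 0 T,
    CapD (β 0) 0 φ x t + ∑ i ∈ Finset.Icc 1 m, d i t * CapD (β i) 0 φ x t = h t

/-- The initial conditions `((1/φ′) d/dt)^k x (0+) = c_k`, `k = 0, …, n₀−1`. -/
def InitCond (φ : ℝ → ℝ) (n0 : ℕ) (c : ℕ → ℂ) (x : ℝ → ℂ) : Prop :=
  ∀ k < n0, Filter.Tendsto ((phiD φ)^[k] x) (nhdsWithin 0 (Set.Ioi 0)) (nhds (c k))

/-- The growth condition (G): there are `ν > 0` and `0 < C < 1` with
`Σ_{i=1}^m bound_i ‖(I^{β₀−β_i,φ} e^{ν·})(t)‖ ≤ C e^{ν t}` on `[0,T]`. -/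
def GrowthCond (T : ℝ) (φ : ℝ → ℝ) (m : ℕ) (β : ℕ → ℂ) (bound : ℕ → ℝ) : Prop :=
  ∃ ν : ℝ, 0 < ν ∧ ∃ C : ℝ, 0 < C ∧ C < 1 ∧ ∀ t ∈ Set.Icc 0 T,
    ∑ i ∈ Finset.Icc 1 m,
      bound i * ‖RLI (β 0 - β i) 0 φ (fun s => (Real.exp (ν * s) : ℂ)) t‖
      ≤ C * Real.exp (ν * t)

/-- The operator `f ↦ Σ_{i=1}^m d_i(·) I^{β₀−β_i,φ} f`. -/
def opS (φ : ℝ → ℝ) (m : ℕ) (β : ℕ → ℂ) (d : ℕ → ℝ → ℂ) (f : ℝ → ℂ) : ℝ → ℂ :=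
  fun t => ∑ i ∈ Finset.Icc 1 m, d i t * RLI (β 0 - β i) 0 φ f t

/-- The successive-approximation sequence `x₀ = I^{β₀,φ} h`,
`x_n = x₀ − I^{β₀,φ} Σ_i d_i ^C D^{β_i,φ} x_{n−1}`. -/
def apxSeq (φ : ℝ → ℝ) (m : ℕ) (β : ℕ → ℂ) (d : ℕ → ℝ → ℂ) (h : ℝ → ℂ) : ℕ → ℝ → ℂ
  | 0 => RLI (β 0) 0 φ h
  | n + 1 => fun t => RLI (β 0) 0 φ h t -
      RLI (β 0) 0 φ
        (fun s => ∑ i ∈ Finset.Icc 1 m, d i s * CapD (β i) 0 φ (apxSeq φ m β d h n) s) t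

/-- `Ψ_j(t) = (φ(t) − φ(0))^j / Γ(j+1)`. -/
def Psi (φ : ℝ → ℝ) (j : ℕ) (t : ℝ) : ℂ :=
  ((φ t - φ 0 : ℝ) : ℂ) ^ j / (Nat.factorial j : ℂ)

/-- The set `K_j = {i : 1 ≤ i ≤ m, Re β_i ≤ j}`. -/
def Kset (m : ℕ) (β : ℕ → ℂ) (j : ℕ) : Set ℕ :=
  {i : ℕ | 1 ≤ i ∧ i ≤ m ∧ (β i).re ≤ (j : ℝ)}

/-- `ϰ_j = min K_j`. -/
def kappa (m : ℕ) (β : ℕ → ℂ) (j : ℕ) : ℕ := sInf (Kset m β j)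

/-- `X` is a canonical set of solutions of the homogeneous equation (E₀). -/
def IsCanonicalSet (T : ℝ) (φ : ℝ → ℝ) (m : ℕ) (β : ℕ → ℂ) (d : ℕ → ℝ → ℂ)
    (X : ℕ → ℝ → ℂ) : Prop :=
  ∀ j < rlN (β 0),
    SolvesE T φ m β d (fun _ => 0) (X j) ∧
    ∀ k < rlN (β 0),
      Filter.Tendsto ((phiD φ)^[k] (X j)) (nhdsWithin 0 (Set.Ioi 0))
        (nhds (if k = j then 1 else 0))

/-- The multivariate Mittag-Leffler function `E_{(a₁,…,a_n),b}(z₁,…,z_n)`. -/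
def mvML (n : ℕ) (a : Fin n → ℂ) (b : ℂ) (z : Fin n → ℂ) : ℂ :=
  ∑' k : ℕ, ∑ l ∈ Finset.Nat.antidiagonalTuple n k,
    (Nat.multinomial Finset.univ l : ℂ) * (∏ i, z i ^ l i) /
      Complex.Gamma (b + ∑ i, a i * (l i : ℂ))

/-- `g ∈ AC^n[a,b]`: the `(n−1)`-st derivative of `g` is absolutely continuous on `[a,b]`. -/
def ACn (n : ℕ) (a b : ℝ) (g : ℝ → ℂ) : Prop :=
  ContDiffOn ℝ (n - 1 : ℕ) g (Set.Icc a b) ∧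
  ∃ g' : ℝ → ℂ, IntervalIntegrable g' volume a b ∧
    ∀ x ∈ Set.Icc a b, iteratedDeriv (n - 1) g x = iteratedDeriv (n - 1) g a + ∫ t in a..x, g' t

end FracDE

namespace FracDE

variable {φ : ℝ → ℝ} {a b : ℝ}

theorem IsC1Pos.continuousOn (hφ : IsC1Pos φ a b) : ContinuousOn φ (Set.Icc a b) :=
  fun t ht => (hφ.deriv_at t ht).continuousAt.continuousWithinAt

/-- A `C¹` function with positive derivative on `[a,b]` is bi-Lipschitz there. -/
theorem IsC1Pos.exists_biLipschitz (hφ : IsC1Pos φ a b) :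
    ∃ m > 0, ∃ M > 0, (∀ t ∈ Set.Icc a b, deriv φ t ≤ M) ∧
      ∀ s ∈ Set.Icc a b, ∀ t ∈ Set.Icc a b, s ≤ t →
        m * (t - s) ≤ φ t - φ s ∧ φ t - φ s ≤ M * (t - s) := by
  obtain hab | hab := (Set.Icc a b).eq_empty_or_nonempty
  · exact ⟨1, one_pos, 1, one_pos, by simp [hab]⟩
  obtain ⟨p, hp, hmin⟩ := isCompact_Icc.exists_isMinOn hab hφ.continuous_deriv
  obtain ⟨q, hq, hmax⟩ := isCompact_Icc.exists_isMaxOn hab hφ.continuous_deriv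
  have hdiff : DifferentiableOn ℝ φ (interior (Set.Icc a b)) := fun t ht =>
    (hφ.deriv_at t (interior_subset ht)).differentiableAt.differentiableWithinAt
  refine ⟨deriv φ p, hφ.deriv_pos p hp, deriv φ q, hφ.deriv_pos q hq, fun t ht => hmax ht,
    fun s hs t ht hst => ⟨?_, ?_⟩⟩
  · exact (convex_Icc a b).mul_sub_le_image_sub_of_le_deriv hφ.continuousOn hdiff
      (fun x hx => hmin (interior_subset hx)) s hs t ht hst
  · exact (convex_Icc a b).image_sub_le_mul_sub_of_deriv_le hφ.continuousOn hdiff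
      (fun x hx => hmax (interior_subset hx)) s hs t ht hst

/-- The integrand of the fractional integral based at `0`, rescaled to the unit interval. -/
def unitKernel (α : ℂ) (φ : ℝ → ℝ) (f : ℝ → ℂ) (x s : ℝ) : ℂ :=
  (x : ℂ) * (((deriv φ (x * s) : ℝ) : ℂ) * (((φ x - φ (x * s) : ℝ) : ℂ) ^ (α - 1)) * f (x * s))

theorem RLI_zero_eq_integral_unitKernel (α : ℂ) (φ : ℝ → ℝ) (f : ℝ → ℂ) (x : ℝ) :
    RLI α 0 φ f x = (Complex.Gamma α)⁻¹ * ∫ s in (0 : ℝ)..1, unitKernel α φ f x s := by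
  have h := intervalIntegral.smul_integral_comp_mul_left (a := 0) (b := 1)
    (fun t => ((deriv φ t : ℝ) : ℂ) * (((φ x - φ t : ℝ) : ℂ) ^ (α - 1)) * f t) x
  rw [mul_zero, mul_one] at h
  simp only [RLI, unitKernel, intervalIntegral.integral_const_mul, ← h, Complex.real_smul]

theorem rpow_le_add_of_mem_Icc {u v y r : ℝ} (hu : 0 < u) (hy : y ∈ Set.Icc u v) :
    y ^ r ≤ u ^ r + v ^ r := by
  have hy0 : 0 < y := hu.trans_le hy.1
  have hv0 : 0 < v := hy0.trans_le hy.2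
  rcases le_total 0 r with hr | hr
  · linarith [Real.rpow_le_rpow hy0.le hy.2 hr, Real.rpow_nonneg hu.le r]
  · linarith [Real.rpow_le_rpow_of_nonpos hu hy.1 hr, Real.rpow_nonneg hv0.le r]

theorem mul_mem_Icc_zero {b x s : ℝ} (hx : x ∈ Set.Icc 0 b) (hs : s ∈ Set.Icc (0 : ℝ) 1) :
    x * s ∈ Set.Icc 0 b :=
  ⟨mul_nonneg hx.1 hs.1, (mul_le_of_le_one_right hx.1 hs.2).trans hx.2⟩

theorem exists_norm_unitKernel_le {α : ℂ} (hα : 0 < α.re) (hφ : IsC1Pos φ 0 b) {f : ℝ → ℂ}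
    (hf : ContinuousOn f (Set.Icc 0 b)) :
    ∃ C ≥ 0, ∀ x ∈ Set.Icc 0 b, ∀ s ∈ Set.Ico (0 : ℝ) 1,
      ‖unitKernel α φ f x s‖ ≤ C * x ^ α.re * (1 - s) ^ (α.re - 1) := by
  obtain ⟨m, hm, M, hM, hder, hlip⟩ := hφ.exists_biLipschitz
  obtain ⟨K, hK⟩ := isCompact_Icc.exists_bound_of_continuousOn hf
  refine ⟨M * (m ^ (α.re - 1) + M ^ (α.re - 1)) * |K|, by positivity, fun x hx s hs => ?_⟩
  rcases hx.1.eq_or_lt with rfl | hx0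
  · simp [unitKernel, Real.zero_rpow hα.ne']
  have hxs := mul_mem_Icc_zero hx (Set.Ico_subset_Icc_self hs)
  have h1s : 0 < 1 - s := sub_pos.2 hs.2
  have hd : x - x * s = x * (1 - s) := by ring
  have hd0 : 0 < x * (1 - s) := mul_pos hx0 h1s
  obtain ⟨hl, hu⟩ := hlip _ hxs x hx (by linarith)
  rw [hd] at hl hu
  have hpos : 0 < φ x - φ (x * s) := (mul_pos hm hd0).trans_le hl
  have hpow := rpow_le_add_of_mem_Icc (r := α.re - 1) (mul_pos hm hd0) ⟨hl, hu⟩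
  rw [Real.mul_rpow hm.le hd0.le, Real.mul_rpow hM.le hd0.le, ← add_mul,
    Real.mul_rpow hx0.le h1s.le] at hpow
  have hxα : x ^ α.re = x * x ^ (α.re - 1) := by
    rw [Real.rpow_sub_one hx0.ne', mul_div_cancel₀ _ hx0.ne']
  have hφ0 := hφ.deriv_pos _ hxs
  rw [unitKernel, norm_mul, norm_mul, norm_mul, Complex.norm_of_nonneg hx0.le,
    Complex.norm_of_nonneg hφ0.le, Complex.norm_cpow_eq_rpow_re_of_pos hpos, Complex.sub_re,
    Complex.one_re]
  calc x * (deriv φ (x * s) * (φ x - φ (x * s)) ^ (α.re - 1) * ‖f (x * s)‖)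
      ≤ x * (M * ((m ^ (α.re - 1) + M ^ (α.re - 1)) *
          (x ^ (α.re - 1) * (1 - s) ^ (α.re - 1))) * |K|) := by
        gcongr
        · exact hder _ hxs
        · exact (hK _ hxs).trans (le_abs_self K)
    _ = _ := by rw [hxα]; ring

theorem aestronglyMeasurable_unitKernel (α : ℂ) (hφ : IsC1Pos φ 0 b) {f : ℝ → ℂ}
    (hf : ContinuousOn f (Set.Icc 0 b)) {x : ℝ} (hx : x ∈ Set.Icc 0 b) :
    AEStronglyMeasurable (unitKernel α φ f x) (volume.restrict (Set.Icc 0 1)) := by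
  have hmaps : Set.MapsTo (fun s : ℝ => x * s) (Set.Icc 0 1) (Set.Icc 0 b) :=
    fun s hs => mul_mem_Icc_zero hx hs
  have hmul : ContinuousOn (fun s : ℝ => x * s) (Set.Icc 0 1) := by fun_prop
  have h₁ := ((hφ.continuous_deriv.comp hmul hmaps).aemeasurable measurableSet_Icc
    (μ := volume)).complex_ofReal
  have h₂ := (((hφ.continuousOn.comp hmul hmaps).aemeasurable measurableSet_Icc
    (μ := volume)).const_sub (φ x)).complex_ofReal.pow_const (α - 1)
  have h₃ := (hf.comp hmul hmaps).aemeasurable measurableSet_Icc (μ := volume)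
  exact (((h₁.mul h₂).mul h₃).const_mul (x : ℂ)).aestronglyMeasurable

theorem continuousOn_unitKernel {α : ℂ} (hα : 0 < α.re) (hφ : IsC1Pos φ 0 b) {f : ℝ → ℂ}
    (hf : ContinuousOn f (Set.Icc 0 b)) {s : ℝ} (hs : s ∈ Set.Ico (0 : ℝ) 1) :
    ContinuousOn (fun x => unitKernel α φ f x s) (Set.Icc 0 b) := by
  intro x hx
  rcases hx.1.eq_or_lt with rfl | hx0
  · obtain ⟨C, -, hC⟩ := exists_norm_unitKernel_le hα hφ hf
    have hzero : unitKernel α φ f 0 s = 0 := by simp [unitKernel]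
    rw [ContinuousWithinAt, hzero]
    refine squeeze_zero_norm' (eventually_mem_nhdsWithin.mono fun y hy => hC y hy s hs) ?_
    have h := (((Real.continuousAt_rpow_const 0 α.re (Or.inr hα.le)).const_mul C).mul_const
      ((1 - s) ^ (α.re - 1))).tendsto
    simp only [Real.zero_rpow hα.ne', mul_zero, zero_mul] at h
    exact h.mono_left nhdsWithin_le_nhds
  · obtain ⟨m, hm, _, -, -, hlip⟩ := hφ.exists_biLipschitz
    have hmaps : Set.MapsTo (fun y : ℝ => y * s) (Set.Icc 0 b) (Set.Icc 0 b) :=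
      fun y hy => mul_mem_Icc_zero hy (Set.Ico_subset_Icc_self hs)
    have hmul : ContinuousOn (fun y : ℝ => y * s) (Set.Icc 0 b) := by fun_prop
    have hd0 : 0 < x - x * s := by nlinarith [hs.2]
    have hpos : 0 < φ x - φ (x * s) :=
      (mul_pos hm hd0).trans_le (hlip _ (hmaps hx) x hx (by linarith)).1
    have hofReal : ∀ {g : ℝ → ℝ}, ContinuousWithinAt g (Set.Icc 0 b) x →
        ContinuousWithinAt (fun y => (g y : ℂ)) (Set.Icc 0 b) x :=
      fun hg => Complex.continuous_ofReal.continuousAt.comp_continuousWithinAt hg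
    have h₁ := hofReal ((hφ.continuous_deriv.comp hmul hmaps) x hx)
    have h₂ := ContinuousWithinAt.cpow
      (hofReal ((hφ.continuousOn.sub (hφ.continuousOn.comp hmul hmaps)) x hx))
      (continuousWithinAt_const (b := α - 1)) (Complex.ofReal_mem_slitPlane.2 hpos)
    have h₃ := (hf.comp hmul hmaps) x hx
    exact (hofReal continuousWithinAt_id).mul ((h₁.mul h₂).mul h₃)

end FracDE

/-- If `f` is continuous on `[0,b]` then `I_{0+}^{α,φ} f` is continuous on `[0,b]`. -/
theorem statement4 (α : ℂ) (hα : 0 < α.re) (b : ℝ) (hb : 0 < b)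
    (φ : ℝ → ℝ) (hφ : FracDE.IsC1Pos φ 0 b)
    (f : ℝ → ℂ) (hf : ContinuousOn f (Set.Icc 0 b)) :
    ContinuousOn (FracDE.RLI α 0 φ f) (Set.Icc 0 b) := by
  intro x hx
  obtain ⟨C, hC0, hC⟩ := FracDE.exists_norm_unitKernel_le hα hφ hf
  have hIco : ∀ᵐ s : ℝ, s ∈ Set.uIoc (0 : ℝ) 1 → s ∈ Set.Ico (0 : ℝ) 1 := by
    filter_upwards [Measure.ae_ne volume (1 : ℝ)] with s hs1 hs
    rw [Set.uIoc_of_le zero_le_one] at hs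
    exact ⟨hs.1.le, hs.2.lt_of_ne hs1⟩
  have hint : IntervalIntegrable (fun s : ℝ => C * b ^ α.re * (1 - s) ^ (α.re - 1)) volume 0 1 := by
    have h : IntervalIntegrable (fun s : ℝ => s ^ (α.re - 1)) volume 0 1 :=
      intervalIntegral.intervalIntegrable_rpow' (by linarith)
    simpa using ((h.comp_sub_left 1).symm).const_mul (C * b ^ α.re)
  simp only [funext (FracDE.RLI_zero_eq_integral_unitKernel α φ f)]
  refine continuousWithinAt_const.mul
    (intervalIntegral.continuousWithinAt_of_dominated_interval ?_ ?_ hint ?_)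
  · filter_upwards [self_mem_nhdsWithin] with y hy
    refine (FracDE.aestronglyMeasurable_unitKernel α hφ hf hy).mono_set ?_
    rw [Set.uIoc_of_le zero_le_one]
    exact Set.Ioc_subset_Icc_self
  · filter_upwards [self_mem_nhdsWithin] with y hy
    filter_upwards [hIco] with s hs hs'
    refine (hC y hy s (hs hs')).trans ?_
    have h1s : 0 ≤ 1 - s := sub_nonneg.2 (hs hs').2.le
    have hyb := Real.rpow_le_rpow hy.1 hy.2 hα.le
    gcongr
  · filter_upwards [hIco] with s hs hs'
    exact FracDE.continuousOn_unitKernel hα hφ hf (hs hs') x hx
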